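/- Let A be an Artin algebra, n, s ≥ 0, and M, X finitely generated A-modules. Then: (1) if X ∈ [M]_{n+1}, then Ω^s(X) ∈ [Ω^s(M)]_{n+1} and Ω^{-s}(X) ∈ [Ω^{-s}(M)]_{n+1}; (2) if Ω^{-s}(X) ∈ [M]_{n+1}, then X ∈ [Ω^s(M) ⊕ (⊕_{i=0}^{s-1} Ω^i(D(A)))]_{n+s+1}; (3) if Ω^s(X) ∈ [M]_{n+1}, then X ∈ [Ω^{-s}(M) ⊕ (⊕_{i=0}^{s-1} Ω^{-i}(A))]_{n+s+1}. -/

import Mathlib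

universe u w w₁ w₂ w₃ v v₁ v₂ v₃

open CategoryTheory Limits Pretriangulated

namespace ExtDim



variable (A : Type u) [Ring A]

/-- `X` belongs to `add M`: `X` is a direct summand of a finite direct sum of copies of `M`. -/
def MemAdd (M X : ModuleCat.{u} A) : Prop :=
  ∃ (n : ℕ) (Y : ModuleCat.{u} A), Nonempty ((↥X × ↥Y) ≃ₗ[A] (Fin n → ↥M))

/-- The operation `𝒞₁ • 𝒞₂` on classes of modules: (summands of) middle terms of short exact
sequences with outer terms in `𝒞₁` and `𝒞₂`. -/
def Bullet (C₁ C₂ : Set (ModuleCat.{u} A)) : Set (ModuleCat.{u} A) :=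
  {X | ∃ (X' M₁ M₂ : ModuleCat.{u} A), M₁ ∈ C₁ ∧ M₂ ∈ C₂ ∧
    ∃ (f : ↥M₁ →ₗ[A] (↥X × ↥X')) (g : (↥X × ↥X') →ₗ[A] ↥M₂),
      Function.Injective f ∧ Function.Surjective g ∧ LinearMap.range f = LinearMap.ker g}

/-- The class `[M]_n`. -/
def bracket (M : ModuleCat.{u} A) : ℕ → Set (ModuleCat.{u} A)
  | 0 => {X | Subsingleton X}
  | n + 1 => Bullet A {X | MemAdd A M X} (bracket M n)

/-- The extension dimension of a subcategory `𝒜` of `A`-mod: the least `m` such that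
`𝒜 ⊆ [M]_{m+1}` for some finitely generated module `M`. -/
noncomputable def extDimCat (𝒜 : Set (ModuleCat.{u} A)) : ℕ∞ :=
  sInf {m : ℕ∞ | ∃ n : ℕ, m = n ∧ ∃ M : ModuleCat.{u} A, Module.Finite A M ∧
    ∀ X ∈ 𝒜, X ∈ bracket A M (n + 1)}

/-- The subcategory of finitely generated modules, `A`-mod. -/
def fgModules : Set (ModuleCat.{u} A) := {X | Module.Finite A X}

/-- The extension dimension of the Artin algebra `A`. -/
noncomputable def extDim : ℕ∞ := extDimCat A (fgModules A)

/-- A short exact sequence `0 → X → Y → Z → 0` of modules. -/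
def SES {X Y Z : ModuleCat.{u} A} (f : ↥X →ₗ[A] ↥Y) (g : ↥Y →ₗ[A] ↥Z) : Prop :=
  Function.Injective f ∧ Function.Surjective g ∧ LinearMap.range f = LinearMap.ker g

/-- `Ω^n(A-mod)`: the subcategory of all `n`-th syzygy modules. -/
def syzygyCat : ℕ → Set (ModuleCat.{u} A)
  | 0 => fgModules A
  | n + 1 => {X | Module.Finite A X ∧ ∃ (P K : ModuleCat.{u} A),
      Module.Finite A P ∧ Module.Projective A P ∧ K ∈ syzygyCat n ∧
      ∃ (f : ↥X →ₗ[A] ↥P) (g : ↥P →ₗ[A] ↥K), SES A f g}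

/-- The `Ω`-extension dimension of `A`. -/
noncomputable def omegaExtDim : ℕ∞ := ⨅ i : ℕ, extDimCat A (syzygyCat A i)

/-- `Ω^∞(A-mod)`: modules admitting an exact sequence `0 → X → P₀ → P₁ → ⋯` with all `Pᵢ`
finitely generated projective. -/
def infSyzygyCat : Set (ModuleCat.{u} A) :=
  {X | Module.Finite A X ∧ ∃ (K P : ℕ → ModuleCat.{u} A), Nonempty (↥(K 0) ≃ₗ[A] ↥X) ∧
    ∀ i, Module.Finite A (P i) ∧ Module.Projective A (P i) ∧
      ∃ (f : ↥(K i) →ₗ[A] ↥(P i)) (g : ↥(P i) →ₗ[A] ↥(K (i + 1))), SES A f g}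

/-- `X` has projective dimension at most `n`. -/
def ProjDimLE : ModuleCat.{u} A → ℕ → Prop
  | X, 0 => Module.Projective A X
  | X, n + 1 => ∃ (K P : ModuleCat.{u} A), Module.Projective A P ∧
      (∃ (f : ↥K →ₗ[A] ↥P) (g : ↥P →ₗ[A] ↥X), SES A f g) ∧ ProjDimLE K n

/-- The projective dimension of a module, as an element of `ℕ∞`. -/
noncomputable def pdim (X : ModuleCat.{u} A) : ℕ∞ :=
  sInf {m : ℕ∞ | ∃ n : ℕ, m = n ∧ ProjDimLE A X n}

/-- `A` has finite global dimension. -/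
def HasFiniteGlobalDimension : Prop := ∃ n : ℕ, ∀ X : ModuleCat.{u} A, ProjDimLE A X n

section MinimalSyzygies

variable (A : Type u) [Ring A]

/-- `f : P → X` is a projective cover: `P` is (finitely generated) projective, `f` is
surjective and its kernel is superfluous in `P`. -/
def IsProjectiveCover {P X : ModuleCat.{u} A} (f : ↥P →ₗ[A] ↥X) : Prop :=
  Module.Finite A P ∧ Module.Projective A P ∧ Function.Surjective f ∧
  ∀ N : Submodule A ↥P, N ⊔ LinearMap.ker f = ⊤ → N = ⊤

/-- `S` is the `n`-th syzygy `Ω^n(X)`, computed via minimal projective resolutions, i.e.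
iterated kernels of projective covers. -/
def IsMinimalSyzygy : ℕ → ModuleCat.{u} A → ModuleCat.{u} A → Prop
  | 0, X, S => Nonempty (↥S ≃ₗ[A] ↥X)
  | n + 1, X, S => ∃ (P : ModuleCat.{u} A) (f : ↥P →ₗ[A] ↥X), IsProjectiveCover A f ∧
      IsMinimalSyzygy n (ModuleCat.of A ↥(LinearMap.ker f)) S

/-- `g : X → I` is an injective envelope: `I` is injective, `g` is injective and its image
is an essential submodule of `I`. -/
def IsInjectiveEnvelope {X I : ModuleCat.{u} A} (g : ↥X →ₗ[A] ↥I) : Prop :=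
  Module.Injective A ↥I ∧ Function.Injective g ∧
  ∀ N : Submodule A ↥I, N ≠ ⊥ → N ⊓ LinearMap.range g ≠ ⊥

/-- `S` is the `n`-th cosyzygy `Ω^{-n}(X)`, computed via iterated cokernels of injective
envelopes. -/
def IsMinimalCosyzygy : ℕ → ModuleCat.{u} A → ModuleCat.{u} A → Prop
  | 0, X, S => Nonempty (↥S ≃ₗ[A] ↥X)
  | n + 1, X, S => ∃ (I : ModuleCat.{u} A) (g : ↥X →ₗ[A] ↥I), IsInjectiveEnvelope A g ∧
      IsMinimalCosyzygy n (ModuleCat.of A (↥I ⧸ LinearMap.range g)) S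

end MinimalSyzygies

section Dual

variable (k : Type u) [CommRing k] (A : Type u) [Ring A] [Algebra k A]
variable (E : Type u) [AddCommGroup E] [Module k E]

/-- The left `A`-module structure on `Hom_k(A, E)`, via the right regular action of `A` on
itself: `(a • f) x = f (x * a)`. -/
noncomputable instance dualModule : Module A (A →ₗ[k] E) :=
  { smul := fun a f => f.comp (LinearMap.mulRight k a)
    one_smul := fun f => by
      ext x
      show f (x * 1) = f x
      rw [mul_one]
    mul_smul := fun a b f => by
      ext x
      show f (x * (a * b)) = f (x * a * b)
      rw [mul_assoc]
    smul_zero := fun a => by ext x; rfl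
    smul_add := fun a f g => by ext x; rfl
    add_smul := fun a b f => by
      ext x
      show f (x * (a + b)) = f (x * a) + f (x * b)
      rw [mul_add, map_add]
    zero_smul := fun f => by
      ext x
      show f (x * 0) = 0
      rw [mul_zero, map_zero] }

end Dual

/-!
`[M]_n` consists of the retracts of modules with a filtration of length `n` whose subquotients
are powers of `M`. Along such a filtration the horseshoe lemma builds syzygies and cosyzygies
that are filtered by powers of `Ω^s(M)` and `Ω^{-s}(M)`. A projective cover is a summand of every
projective presentation, so the minimal syzygy of a retract is again a retract; this gives (1).

For (2), let `0 → Y → I → Ω^{-1}(Y) → 0` be an injective envelope and let `Ω^{-1}(Y)` be a retract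
of a filtered module `Z` with a projective presentation `0 → L → P → Z → 0`. The pullback of
`P → Z` along `I → Ω^{-1}(Y) → Z` is an extension of `I` by `L`, and `Y` is a retract of it because
`P → Z → Ω^{-1}(Y)` lifts to `I`. As `I ∈ add D(A)`, each of the `s` steps adds one summand and
raises the length by one. For (3) one takes a pushout along an injective presentation instead.
-/

section Extension

variable {A : Type u} [Ring A] {K L M N X Y Z : ModuleCat.{u} A}

namespace SES

variable {f : X →ₗ[A] Y} {g : Y →ₗ[A] Z} {T : Type*} [AddCommGroup T] [Module A T]

theorem exact (h : SES A f g) : Function.Exact f g :=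
  LinearMap.exact_iff.2 h.2.2.symm

theorem of_exact (hf : Function.Injective f) (hg : Function.Surjective g)
    (hfg : Function.Exact f g) : SES A f g :=
  ⟨hf, hg, hfg.linearMap_ker_eq.symm⟩

theorem exists_lift (h : SES A f g) (t : T →ₗ[A] Y) (ht : ∀ x, g (t x) = 0) :
    ∃ t' : T →ₗ[A] X, f ∘ₗ t' = t :=
  have hrange x : t x ∈ LinearMap.range f := (h.exact _).1 (ht x)
  ⟨(LinearEquiv.ofInjective f h.1).symm ∘ₗ t.codRestrict _ hrange, LinearMap.ext fun x =>
    LinearEquiv.ofInjective_symm_apply f (h := h.1) ⟨t x, hrange x⟩⟩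

theorem exists_desc (h : SES A f g) (t : Y →ₗ[A] T) (ht : ∀ x, t (f x) = 0) :
    ∃ t' : Z →ₗ[A] T, t' ∘ₗ g = t := by
  have hker : LinearMap.ker g ≤ LinearMap.ker t := by
    rw [← h.2.2]
    rintro _ ⟨x, rfl⟩
    exact ht x
  refine ⟨(LinearMap.ker g).liftQ t hker ∘ₗ (g.quotKerEquivOfSurjective h.2.1).symm, ?_⟩
  ext y
  have hy : (g.quotKerEquivOfSurjective h.2.1).symm (g y) = Submodule.Quotient.mk y := by
    rw [LinearEquiv.symm_apply_eq, g.quotKerEquivOfSurjective_apply_mk]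
  rw [LinearMap.comp_apply, LinearMap.comp_apply, LinearEquiv.coe_coe, hy, Submodule.liftQ_apply]

end SES

/-- `Y` is an extension of `Z` by `X`: the existence of a short exact sequence
`0 → X → Y → Z → 0`. -/
def IsExtension (X Y Z : ModuleCat.{u} A) : Prop :=
  ∃ (f : X →ₗ[A] Y) (g : Y →ₗ[A] Z), SES A f g

theorem isExtension_ker {g : Y →ₗ[A] Z} (hg : Function.Surjective g) :
    IsExtension (.of A (LinearMap.ker g)) Y Z :=
  ⟨(LinearMap.ker g).subtype, g, Subtype.val_injective, hg, Submodule.range_subtype _⟩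

theorem isExtension_quotient_range {f : X →ₗ[A] Y} (hf : Function.Injective f) :
    IsExtension X Y (.of A (Y ⧸ LinearMap.range f)) :=
  ⟨f, (LinearMap.range f).mkQ, hf, Submodule.mkQ_surjective _, (Submodule.ker_mkQ _).symm⟩

variable (X Y) in
theorem isExtension_prod_snd : IsExtension X (.of A (X × Y)) Y :=
  ⟨.inl A X Y, .snd A X Y, LinearMap.inl_injective, LinearMap.snd_surjective,
    LinearMap.range_inl A X Y⟩

namespace IsExtension

theorem congr (h : IsExtension X Y Z) (eX : X ≃ₗ[A] K) (eY : Y ≃ₗ[A] L) (eZ : Z ≃ₗ[A] M) :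
    IsExtension K L M := by
  obtain ⟨f, g, h⟩ := h
  refine ⟨eY ∘ₗ f ∘ₗ eX.symm, eZ ∘ₗ g ∘ₗ eY.symm, .of_exact ?_ ?_ ?_⟩
  · simpa using h.1
  · simpa using h.2.1
  · exact .of_ladder_linearEquiv_of_exact (e₁ := eX) (e₂ := eY) (e₃ := eZ) (by ext; simp)
      (by ext; simp) h.exact

theorem prod (h : IsExtension X Y Z) (h' : IsExtension K L M) :
    IsExtension (.of A (X × K)) (.of A (Y × L)) (.of A (Z × M)) := by
  obtain ⟨f, g, h⟩ := h
  obtain ⟨f', g', h'⟩ := h'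
  refine ⟨f.prodMap f', g.prodMap g', h.1.prodMap h'.1, h.2.1.prodMap h'.2.1, ?_⟩
  rw [LinearMap.range_prodMap, LinearMap.ker_prodMap, h.2.2, h'.2.2]

theorem prod_left (h : IsExtension X Y Z) (K : ModuleCat.{u} A) :
    IsExtension (.of A (K × X)) (.of A (K × Y)) Z := by
  obtain ⟨f, g, h⟩ := h
  refine ⟨LinearMap.id.prodMap f, g ∘ₗ .snd A K Y, Function.injective_id.prodMap h.1,
    h.2.1.comp LinearMap.snd_surjective, ?_⟩
  ext ⟨k, y⟩
  simpa using (h.exact y).symm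

theorem prod_right (h : IsExtension X Y Z) (K : ModuleCat.{u} A) :
    IsExtension X (.of A (Y × K)) (.of A (Z × K)) := by
  obtain ⟨f, g, h⟩ := h
  refine ⟨.inl A Y K ∘ₗ f, g.prodMap LinearMap.id, LinearMap.inl_injective.comp h.1,
    h.2.1.prodMap Function.surjective_id, ?_⟩
  ext ⟨y, k⟩
  simpa [eq_comm, and_comm] using and_congr_right fun _ => (h.exact y).symm

theorem pi (h : IsExtension X Y Z) (m : ℕ) :
    IsExtension (.of A (Fin m → X)) (.of A (Fin m → Y)) (.of A (Fin m → Z)) := by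
  obtain ⟨f, g, h⟩ := h
  refine ⟨f.compLeft _, g.compLeft _, h.1.comp_left, h.2.1.comp_left, ?_⟩
  rw [LinearMap.range_compLeft, LinearMap.ker_compLeft, h.2.2]

theorem nonempty_linearEquiv_of_subsingleton_left (h : IsExtension X Y Z) [Subsingleton X] :
    Nonempty (Y ≃ₗ[A] Z) := by
  obtain ⟨f, g, h⟩ := h
  refine ⟨.ofBijective g ⟨(injective_iff_map_eq_zero g).2 fun y hy => ?_, h.2.1⟩⟩
  obtain ⟨x, rfl⟩ := (h.exact y).1 hy
  rw [Subsingleton.elim x 0, map_zero]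

theorem exists_assoc (hL : IsExtension L X N) (hX : IsExtension X Y Z) :
    ∃ M : ModuleCat.{u} A, IsExtension L Y M ∧ IsExtension N M Z := by
  obtain ⟨u, v, huv⟩ := hL
  obtain ⟨f, g, hfg⟩ := hX
  obtain ⟨a, ha⟩ := huv.exists_desc ((LinearMap.range (f ∘ₗ u)).mkQ ∘ₗ f)
    fun l => (Submodule.Quotient.mk_eq_zero _).2 ⟨l, rfl⟩
  have hav x : a (v x) = Submodule.Quotient.mk (f x) := LinearMap.congr_fun ha x
  have hgfu : LinearMap.range (f ∘ₗ u) ≤ LinearMap.ker g := by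
    rw [← hfg.2.2]
    exact LinearMap.range_comp_le_range u f
  refine ⟨_, isExtension_quotient_range (f := f ∘ₗ u) (hfg.1.comp huv.1), a,
    (LinearMap.range (f ∘ₗ u)).liftQ g hgfu, .of_exact ?_ ?_ ?_⟩
  · refine (injective_iff_map_eq_zero a).2 fun n hn => ?_
    obtain ⟨x, rfl⟩ := huv.2.1 n
    rw [hav, Submodule.Quotient.mk_eq_zero] at hn
    obtain ⟨l, hl⟩ := hn
    rw [← hfg.1 hl, huv.exact.apply_apply_eq_zero]
  · intro z
    obtain ⟨y, rfl⟩ := hfg.2.1 z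
    exact ⟨Submodule.Quotient.mk y, rfl⟩
  · intro w
    obtain ⟨y, rfl⟩ := Submodule.Quotient.mk_surjective _ w
    rw [Submodule.liftQ_apply, hfg.exact y]
    constructor
    · rintro ⟨x, rfl⟩
      exact ⟨v x, hav x⟩
    · rintro ⟨n, hn⟩
      obtain ⟨x, rfl⟩ := huv.2.1 n
      rw [hav, Submodule.Quotient.eq] at hn
      obtain ⟨l, hl⟩ := hn
      exact ⟨x - u l, by rw [map_sub, sub_eq_iff_eq_add, ← sub_eq_iff_eq_add', ← hl]; rfl⟩

theorem exists_assoc_symm (hY : IsExtension L Y M) (hM : IsExtension N M Z) :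
    ∃ X : ModuleCat.{u} A, IsExtension L X N ∧ IsExtension X Y Z := by
  obtain ⟨u, v, huv⟩ := hY
  obtain ⟨f, g, hfg⟩ := hM
  let S := LinearMap.ker (g ∘ₗ v)
  obtain ⟨q, hq⟩ := hfg.exists_lift (v ∘ₗ S.subtype) fun x => x.2
  have hfq (x : S) : f (q x) = v x := LinearMap.congr_fun hq x
  have hS l : u l ∈ S := by simp [S, huv.exact.apply_apply_eq_zero]
  refine ⟨.of A S, ⟨u.codRestrict S hS, q, .of_exact ?_ ?_ ?_⟩,
    isExtension_ker (hfg.2.1.comp huv.2.1)⟩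
  · exact fun l l' hl => huv.1 (congrArg Subtype.val hl)
  · intro n
    obtain ⟨y, hy⟩ := huv.2.1 (f n)
    have hyS : y ∈ S := by simp [S, hy, hfg.exact.apply_apply_eq_zero]
    exact ⟨⟨y, hyS⟩, hfg.1 ((hfq _).trans hy)⟩
  · intro x
    rw [← map_eq_zero_iff f hfg.1, hfq, huv.exact]
    exact exists_congr fun l => Iff.symm Subtype.ext_iff

end IsExtension

end Extension

section Retract

variable {A : Type u} [Ring A] {L M N X Y Z : ModuleCat.{u} A}

theorem nonempty_retract_iff :
    Nonempty (Retract X Y) ↔ ∃ (i : X →ₗ[A] Y) (r : Y →ₗ[A] X), ∀ x, r (i x) = x := by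
  constructor
  · rintro ⟨ρ⟩
    exact ⟨ρ.i.hom, ρ.r.hom, fun x => ConcreteCategory.congr_hom ρ.retract x⟩
  · rintro ⟨i, r, h⟩
    exact ⟨⟨ModuleCat.ofHom i, ModuleCat.ofHom r, by ext x; exact h x⟩⟩

theorem nonempty_retract_of_linearEquiv (e : X ≃ₗ[A] Y) : Nonempty (Retract X Y) :=
  ⟨.ofIso e.toModuleIso⟩

variable (X Y) in
theorem nonempty_retract_prod_left : Nonempty (Retract X (.of A (X × Y))) :=
  nonempty_retract_iff.2 ⟨.inl A X Y, .fst A X Y, fun _ => rfl⟩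

variable (X Y) in
theorem nonempty_retract_prod_right : Nonempty (Retract Y (.of A (X × Y))) :=
  nonempty_retract_iff.2 ⟨.inr A X Y, .snd A X Y, fun _ => rfl⟩

theorem nonempty_retract_iff_exists_prod :
    Nonempty (Retract X Y) ↔ ∃ X' : ModuleCat.{u} A, Nonempty ((X × X') ≃ₗ[A] Y) := by
  constructor
  · intro h
    obtain ⟨i, r, hir⟩ := nonempty_retract_iff.1 h
    exact ⟨.of A (LinearMap.ker r), ⟨LinearEquiv.prodComm A X _ ≪≫ₗ
      lequivProdOfRightSplitExact (Submodule.subtype_injective _) (Submodule.range_subtype _)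
        (LinearMap.ext hir)⟩⟩
  · rintro ⟨X', ⟨e⟩⟩
    obtain ⟨ρ⟩ := nonempty_retract_prod_left X X'
    obtain ⟨σ⟩ := nonempty_retract_of_linearEquiv (X := .of A (X × X')) e
    exact ⟨ρ.trans σ⟩

theorem nonempty_retract_pi (h : Nonempty (Retract X Y)) (m : ℕ) :
    Nonempty (Retract (ModuleCat.of A (Fin m → X)) (ModuleCat.of A (Fin m → Y))) := by
  obtain ⟨i, r, hir⟩ := nonempty_retract_iff.1 h
  exact nonempty_retract_iff.2 ⟨i.compLeft _, r.compLeft _, fun x => funext fun j => hir (x j)⟩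

theorem memAdd_iff : MemAdd A M X ↔ ∃ m : ℕ, Nonempty (Retract X (.of A (Fin m → M))) :=
  exists_congr fun m => (nonempty_retract_iff_exists_prod (Y := .of A (Fin m → M))).symm

theorem MemAdd.of_retract (hX : MemAdd A M X) (hM : Nonempty (Retract M N)) : MemAdd A N X := by
  obtain ⟨m, ⟨ρ⟩⟩ := memAdd_iff.1 hX
  obtain ⟨σ⟩ := nonempty_retract_pi hM m
  exact memAdd_iff.2 ⟨m, ⟨ρ.trans σ⟩⟩

theorem IsExtension.exists_of_retract (h : IsExtension X Y Z) (hX : Nonempty (Retract X L))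
    (hZ : Nonempty (Retract Z N)) :
    ∃ M : ModuleCat.{u} A, IsExtension L M N ∧ Nonempty (Retract Y M) := by
  obtain ⟨X', ⟨eX⟩⟩ := nonempty_retract_iff_exists_prod.1 hX
  obtain ⟨Z', ⟨eZ⟩⟩ := nonempty_retract_iff_exists_prod.1 hZ
  exact ⟨_, (h.prod (isExtension_prod_snd X' Z')).congr eX (.refl A _) eZ,
    nonempty_retract_prod_left ..⟩

end Retract

section Bracket

variable {A : Type u} [Ring A] {M N X Y Z : ModuleCat.{u} A} {a b n : ℕ}

/-- `Y` has a filtration of length `n` whose subquotients are finite powers of `M`. The members of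
`[M]_n` are the retracts of such modules. -/
inductive IsPowerFiltered (M : ModuleCat.{u} A) : ℕ → ModuleCat.{u} A → Prop
  | zero {Y : ModuleCat.{u} A} (h : Subsingleton Y) : IsPowerFiltered M 0 Y
  | extend {n : ℕ} {Y Z : ModuleCat.{u} A} (m : ℕ) (h : IsExtension (.of A (Fin m → M)) Y Z)
      (hZ : IsPowerFiltered M n Z) : IsPowerFiltered M (n + 1) Y

namespace IsPowerFiltered

theorem congr (h : IsPowerFiltered M n X) (e : X ≃ₗ[A] Y) : IsPowerFiltered M n Y := by
  cases h with
  | zero h => exact .zero e.symm.toEquiv.subsingleton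
  | extend m h hZ => exact .extend m (h.congr (.refl A _) e (.refl A _)) hZ

theorem add (hX : IsPowerFiltered M a X) (hZ : IsPowerFiltered M b Z) (h : IsExtension X Y Z) :
    IsPowerFiltered M (a + b) Y := by
  induction hX generalizing Y with
  | zero hX =>
    obtain ⟨e⟩ := h.nonempty_linearEquiv_of_subsingleton_left
    rw [zero_add]
    exact hZ.congr e.symm
  | extend m hM _ ih =>
    obtain ⟨W, hYW, hWZ⟩ := hM.exists_assoc h
    rw [Nat.add_right_comm]
    exact .extend m hYW (ih hWZ)

variable (M) in
theorem pi (m : ℕ) : IsPowerFiltered M 1 (.of A (Fin m → M)) :=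
  .extend m ((isExtension_prod_snd _ (.of A PUnit)).congr (.refl A _)
    LinearEquiv.prodUnique (.refl A _)) (.zero inferInstance)

end IsPowerFiltered

theorem mem_bracket_iff :
    X ∈ bracket A M n ↔ ∃ Y, IsPowerFiltered M n Y ∧ Nonempty (Retract X Y) := by
  induction n generalizing X with
  | zero =>
    constructor
    · exact fun h => ⟨X, .zero h, ⟨.refl X⟩⟩
    · rintro ⟨Y, ⟨hY⟩, hXY⟩
      obtain ⟨i, r, hir⟩ := nonempty_retract_iff.1 hXY
      exact (Function.LeftInverse.injective hir).subsingleton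
  | succ n ih =>
    constructor
    · rintro ⟨X', M₁, M₂, hM₁, hM₂, h⟩
      obtain ⟨m, hm⟩ := memAdd_iff.1 hM₁
      obtain ⟨Z, hZ, hM₂Z⟩ := ih.1 hM₂
      have hX : IsExtension M₁ (.of A (X × X')) M₂ := h
      obtain ⟨Y, hY, ⟨ρ⟩⟩ := hX.exists_of_retract hm hM₂Z
      obtain ⟨σ⟩ := nonempty_retract_prod_left X X'
      exact ⟨Y, .extend m hY hZ, ⟨σ.trans ρ⟩⟩
    · rintro ⟨Y, hY, hXY⟩
      obtain _ | ⟨m, hY, hZ⟩ := hY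
      obtain ⟨X', ⟨e⟩⟩ := nonempty_retract_iff_exists_prod.1 hXY
      exact ⟨X', _, _, memAdd_iff.2 ⟨m, ⟨.refl _⟩⟩, ih.2 ⟨_, hZ, ⟨.refl _⟩⟩,
        hY.congr (L := .of A (X × X')) (.refl A _) e.symm (.refl A _)⟩

theorem mem_bracket_of_retract (hY : Y ∈ bracket A M n) (h : Nonempty (Retract X Y)) :
    X ∈ bracket A M n := by
  obtain ⟨Z, hZ, ⟨σ⟩⟩ := mem_bracket_iff.1 hY
  obtain ⟨ρ⟩ := h
  exact mem_bracket_iff.2 ⟨Z, hZ, ⟨ρ.trans σ⟩⟩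

theorem bracket_subset_of_retract (h : Nonempty (Retract M N)) : bracket A M n ⊆ bracket A N n := by
  induction n with
  | zero => exact subset_rfl
  | succ n ih =>
    rintro X ⟨X', M₁, M₂, hM₁, hM₂, hX⟩
    exact ⟨X', M₁, M₂, hM₁.of_retract h, ih hM₂, hX⟩

theorem mem_bracket_one_of_memAdd (h : MemAdd A M X) : X ∈ bracket A M 1 := by
  obtain ⟨m, hm⟩ := memAdd_iff.1 h
  exact mem_bracket_iff.2 ⟨_, .pi M m, hm⟩

theorem IsExtension.mem_bracket_add (h : IsExtension X Y Z) (hX : X ∈ bracket A M a)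
    (hZ : Z ∈ bracket A M b) : Y ∈ bracket A M (a + b) := by
  obtain ⟨X', hX', hXX'⟩ := mem_bracket_iff.1 hX
  obtain ⟨Z', hZ', hZZ'⟩ := mem_bracket_iff.1 hZ
  obtain ⟨Y', hY', hYY'⟩ := h.exists_of_retract hXX' hZZ'
  exact mem_bracket_iff.2 ⟨Y', hX'.add hZ' hY', hYY'⟩

end Bracket

section Horseshoe

variable {A : Type u} [Ring A] {n : ℕ}
variable {J J₁ J₂ K K₁ K₂ L M M₁ M₂ N N₁ N₂ P P₁ P₂ Y : ModuleCat.{u} A}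

theorem injective_prod {I J : Type u} [AddCommGroup I] [Module A I] [AddCommGroup J] [Module A J]
    (hI : Module.Injective A I) (hJ : Module.Injective A J) : Module.Injective A (I × J) where
  out X Z _ _ _ _ f hf g := by
    obtain ⟨a, ha⟩ := hI.out f hf (.fst A I J ∘ₗ g)
    obtain ⟨b, hb⟩ := hJ.out f hf (.snd A I J ∘ₗ g)
    exact ⟨a.prod b, fun x => Prod.ext (ha x) (hb x)⟩

theorem injective_of_subsingleton (I : Type u) [AddCommGroup I] [Module A I] [Subsingleton I] :
    Module.Injective A I :=
  ⟨fun _ _ _ _ _ _ _ _ _ => ⟨0, fun _ => Subsingleton.elim _ _⟩⟩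

namespace IsExtension

theorem prod_projective (hY : IsExtension M₁ Y M₂) (hP : IsExtension K P M₂)
    [Module.Projective A P] : IsExtension K (.of A (M₁ × P)) Y := by
  obtain ⟨f, g, hfg⟩ := hY
  obtain ⟨u, p, hup⟩ := hP
  obtain ⟨q, hq⟩ := Module.projective_lifting_property g p hfg.2.1
  have hgq x : g (q x) = p x := LinearMap.congr_fun hq x
  obtain ⟨c, hc⟩ := hfg.exists_lift (q ∘ₗ u) fun x =>
    (hgq _).trans (hup.exact.apply_apply_eq_zero x)
  have hfc x : f (c x) = q (u x) := LinearMap.congr_fun hc x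
  refine ⟨(-c).prod u, f.coprod q, .of_exact ?_ ?_ ?_⟩
  · exact fun x y hxy => hup.1 (congrArg Prod.snd hxy)
  · intro y
    obtain ⟨b, hb⟩ := hup.2.1 (g y)
    obtain ⟨m, hm⟩ := (hfg.exact (y - q b)).1 (by rw [map_sub, hgq, hb, sub_self])
    exact ⟨(m, b), by rw [LinearMap.coprod_apply, hm, sub_add_cancel]⟩
  · refine LinearMap.exact_of_comp_of_mem_range (LinearMap.ext fun x => by simp [hfc]) ?_
    rintro ⟨m, b⟩ h
    change f m + q b = 0 at h
    have hb : p b = 0 := by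
      rw [← hgq, eq_neg_of_add_eq_zero_right h, map_neg, hfg.exact.apply_apply_eq_zero, neg_zero]
    obtain ⟨x, rfl⟩ := (hup.exact b).1 hb
    refine ⟨x, Prod.ext (hfg.1 ?_) rfl⟩
    change f (-c x) = f m
    rw [map_neg, hfc, eq_neg_of_add_eq_zero_left h]

theorem prod_injective (hY : IsExtension M₁ Y M₂) (hJ : IsExtension M₁ J N)
    (hJinj : Module.Injective A J) : IsExtension Y (.of A (J × M₂)) N := by
  obtain ⟨f, g, hfg⟩ := hY
  obtain ⟨u, p, hup⟩ := hJ
  obtain ⟨e, he⟩ := hJinj.out f hfg.1 u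
  obtain ⟨c, hc⟩ := hfg.exists_desc (p ∘ₗ e) fun x => by
    rw [LinearMap.comp_apply, he, hup.exact.apply_apply_eq_zero]
  have hcg y : c (g y) = p (e y) := LinearMap.congr_fun hc y
  refine ⟨e.prod g, p.coprod (-c), .of_exact ?_ ?_ ?_⟩
  · refine (injective_iff_map_eq_zero _).2 fun y hy => ?_
    obtain ⟨x, rfl⟩ := (hfg.exact y).1 (congrArg Prod.snd hy)
    have hx : u x = 0 := (he x).symm.trans (congrArg Prod.fst hy)
    rw [hup.1 (hx.trans (map_zero u).symm), map_zero]
  · intro z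
    obtain ⟨a, rfl⟩ := hup.2.1 z
    exact ⟨(a, 0), by simp⟩
  · refine LinearMap.exact_of_comp_of_mem_range (LinearMap.ext fun x => by simp [hcg]) ?_
    rintro ⟨a, m⟩ h
    obtain ⟨y, rfl⟩ := hfg.2.1 m
    have ha : p (a - e y) = 0 := by simpa [hcg, sub_eq_add_neg] using h
    obtain ⟨x, hx⟩ := (hup.exact _).1 ha
    refine ⟨f x + y, Prod.ext ?_ ?_⟩
    · simp [he, hx]
    · simp [hfg.exact.apply_apply_eq_zero]

theorem exists_horseshoe_projective (hY : IsExtension M₁ Y M₂) (h₁ : IsExtension K₁ P₁ M₁)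
    (h₂ : IsExtension K₂ P₂ M₂) [Module.Projective A P₂] :
    ∃ K : ModuleCat.{u} A, IsExtension K₁ K K₂ ∧ IsExtension K (.of A (P₁ × P₂)) Y :=
  (h₁.prod_right P₂).exists_assoc_symm (hY.prod_projective h₂)

theorem exists_horseshoe_injective (hY : IsExtension M₁ Y M₂) (h₁ : IsExtension M₁ J₁ N₁)
    (h₂ : IsExtension M₂ J₂ N₂) (hJ₁ : Module.Injective A J₁) :
    ∃ N : ModuleCat.{u} A, IsExtension Y (.of A (J₁ × J₂)) N ∧ IsExtension N₁ N N₂ :=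
  (hY.prod_injective h₁ hJ₁).exists_assoc (h₂.prod_left J₁)

end IsExtension

theorem IsPowerFiltered.exists_syzygy (hY : IsPowerFiltered M n Y) (hM : IsExtension K P M)
    [Module.Projective A P] :
    ∃ L Q : ModuleCat.{u} A, Module.Projective A Q ∧ IsExtension L Q Y ∧ IsPowerFiltered K n L := by
  induction hY with
  | @zero Y hY =>
    exact ⟨Y, .of A (Y × Y), .of_free, isExtension_prod_snd Y Y, .zero hY⟩
  | extend m hY _ ih =>
    obtain ⟨L, Q, hQ, hL, hKL⟩ := ih
    obtain ⟨L', hKL', hL'⟩ := hY.exists_horseshoe_projective (hM.pi m) hL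
    have hP : Module.Projective A (Fin m → P) :=
      .of_equiv (DFinsupp.linearEquivFunOnFintype (R := A) (M := fun _ : Fin m => P))
    exact ⟨L', _, inferInstanceAs (Module.Projective A ((Fin m → P) × Q)), hL', .extend m hKL' hKL⟩

theorem IsPowerFiltered.exists_cosyzygy (hY : IsPowerFiltered M n Y) (hM : IsExtension M J N)
    (hJ : Module.Injective A J) :
    ∃ L I : ModuleCat.{u} A, Module.Injective A I ∧ IsExtension Y I L ∧ IsPowerFiltered N n L := by
  induction hY with
  | @zero Y hY =>
    exact ⟨Y, .of A (Y × Y), injective_of_subsingleton _, isExtension_prod_snd Y Y, .zero hY⟩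
  | extend m hY _ ih =>
    obtain ⟨L, I, hI, hL, hNL⟩ := ih
    have hpi : Module.Injective A (Fin m → J) := inferInstance
    obtain ⟨L', hL', hNL'⟩ := hY.exists_horseshoe_injective (hM.pi m) hL hpi
    exact ⟨L', _, injective_prod hpi hI, hL', .extend m hNL' hNL⟩

end Horseshoe

section Minimality

variable {A : Type u} [Ring A] {I J K L M N P Q X Y : ModuleCat.{u} A} {n : ℕ}
  {f : P →ₗ[A] X} {g : X →ₗ[A] I}

namespace IsProjectiveCover

theorem surjective_of_comp_eq (hf : IsProjectiveCover A f) {c : P →ₗ[A] P}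
    (hc : ∀ x, f (c x) = f x) : Function.Surjective c := by
  refine LinearMap.range_eq_top.1 (hf.2.2.2 _ (eq_top_iff.2 fun x _ => ?_))
  rw [← add_sub_cancel (c x) x]
  exact Submodule.add_mem_sup ⟨x, rfl⟩ (by simp [hc])

theorem bijective_of_comp_eq (hf : IsProjectiveCover A f) {c : P →ₗ[A] P}
    (hc : ∀ x, f (c x) = f x) : Function.Bijective c := by
  have hsurj := hf.surjective_of_comp_eq hc
  have := hf.2.1
  obtain ⟨s, hs⟩ := Module.projective_lifting_property c .id hsurj
  have hcs x : c (s x) = x := LinearMap.congr_fun hs x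
  have hs' : Function.Surjective s := hf.surjective_of_comp_eq fun x => by rw [← hc, hcs]
  exact ⟨(Function.LeftInverse.rightInverse_of_surjective hcs hs').injective, hsurj⟩

theorem nonempty_retract_ker (hf : IsProjectiveCover A f) (hXY : Nonempty (Retract X Y))
    (hY : IsExtension L Q Y) [Module.Projective A Q] :
    Nonempty (Retract (ModuleCat.of A (LinearMap.ker f)) L) := by
  obtain ⟨i, r, hir⟩ := nonempty_retract_iff.1 hXY
  obtain ⟨u, v, huv⟩ := hY
  have := hf.2.1
  obtain ⟨a, ha⟩ := Module.projective_lifting_property v (i ∘ₗ f) huv.2.1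
  have hva x : v (a x) = i (f x) := LinearMap.congr_fun ha x
  obtain ⟨b, hb⟩ := Module.projective_lifting_property f (r ∘ₗ v) hf.2.2.1
  have hfb y : f (b y) = r (v y) := LinearMap.congr_fun hb y
  have hfba x : f (b (a x)) = f x := by rw [hfb, hva, hir]
  let e : P ≃ₗ[A] P := .ofBijective (b ∘ₗ a) (hf.bijective_of_comp_eq hfba)
  have hfe y : f (e.symm y) = f y := by
    rw [← hfba]
    exact congrArg f (e.apply_symm_apply y)
  obtain ⟨a', ha'⟩ := huv.exists_lift (a ∘ₗ (LinearMap.ker f).subtype) fun x => by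
    simp [hva]
  have hua' x : u (a' x) = a x := LinearMap.congr_fun ha' x
  have hker l : e.symm (b (u l)) ∈ LinearMap.ker f := by
    rw [LinearMap.mem_ker, hfe, hfb, huv.exact.apply_apply_eq_zero, map_zero]
  refine nonempty_retract_iff.2
    ⟨a', (e.symm.toLinearMap ∘ₗ b ∘ₗ u).codRestrict _ hker, fun x => Subtype.ext ?_⟩
  change e.symm (b (u (a' x))) = x
  rw [hua']
  exact e.symm_apply_apply x

theorem ker_mem_bracket (hf : IsProjectiveCover A f) (hX : X ∈ bracket A M n)
    (hM : IsExtension K Q M) [Module.Projective A Q] :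
    .of A (LinearMap.ker f) ∈ bracket A K n := by
  obtain ⟨Y, hY, hXY⟩ := mem_bracket_iff.1 hX
  obtain ⟨L, Q', hQ', hL, hKL⟩ := hY.exists_syzygy hM
  exact mem_bracket_iff.2 ⟨L, hKL, hf.nonempty_retract_ker hXY hL⟩

end IsProjectiveCover

namespace IsInjectiveEnvelope

theorem injective_of_comp_eq (hg : IsInjectiveEnvelope A g) {c : I →ₗ[A] I}
    (hc : ∀ x, c (g x) = g x) : Function.Injective c := by
  refine LinearMap.ker_eq_bot.1 (by_contra fun hne => hg.2.2 _ hne ((Submodule.eq_bot_iff _).2 ?_))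
  rintro _ ⟨hx, x, rfl⟩
  exact (hc x).symm.trans hx

theorem bijective_of_comp_eq (hg : IsInjectiveEnvelope A g) {c : I →ₗ[A] I}
    (hc : ∀ x, c (g x) = g x) : Function.Bijective c := by
  have hinj := hg.injective_of_comp_eq hc
  obtain ⟨r, hr⟩ := hg.1.out c hinj .id
  have hr' : Function.Injective r := hg.injective_of_comp_eq fun x => by
    rw [← hc]
    exact (hr _).trans (hc x).symm
  exact ⟨hinj, (Function.LeftInverse.rightInverse_of_injective hr hr').surjective⟩

theorem nonempty_retract_quotient_range (hg : IsInjectiveEnvelope A g)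
    (hXY : Nonempty (Retract X Y)) (hY : IsExtension Y J N) (hJ : Module.Injective A J) :
    Nonempty (Retract (ModuleCat.of A (I ⧸ LinearMap.range g)) N) := by
  obtain ⟨i, r, hir⟩ := nonempty_retract_iff.1 hXY
  obtain ⟨u, v, huv⟩ := hY
  obtain ⟨a, ha⟩ := hJ.out g hg.2.1 (u ∘ₗ i)
  obtain ⟨b, hb⟩ := hg.1.out u huv.1 (g ∘ₗ r)
  have hag x : a (g x) = u (i x) := ha x
  have hbu y : b (u y) = g (r y) := hb y
  have hbag x : b (a (g x)) = g x := by rw [hag, hbu, hir]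
  let e : I ≃ₗ[A] I := .ofBijective (b ∘ₗ a) (hg.bijective_of_comp_eq hbag)
  have heg x : e.symm (g x) = g x := (LinearEquiv.symm_apply_eq e).2 (hbag x).symm
  obtain ⟨b', hb'⟩ := huv.exists_desc ((LinearMap.range g).mkQ ∘ₗ e.symm.toLinearMap ∘ₗ b)
    fun y => (Submodule.Quotient.mk_eq_zero _).2 ⟨r y, by simp [hbu, heg]⟩
  have hb'v y : b' (v y) = Submodule.Quotient.mk (e.symm (b y)) := LinearMap.congr_fun hb' y
  have hrange : LinearMap.range g ≤ LinearMap.ker (v ∘ₗ a) := by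
    rintro _ ⟨x, rfl⟩
    simp [hag, huv.exact.apply_apply_eq_zero]
  refine nonempty_retract_iff.2 ⟨(LinearMap.range g).liftQ (v ∘ₗ a) hrange, b', fun x => ?_⟩
  obtain ⟨y, rfl⟩ := Submodule.Quotient.mk_surjective _ x
  exact (hb'v (a y)).trans (congrArg Submodule.Quotient.mk (e.symm_apply_apply y))

theorem quotient_range_mem_bracket (hg : IsInjectiveEnvelope A g) (hX : X ∈ bracket A M n)
    (hM : IsExtension M J N) (hJ : Module.Injective A J) :
    .of A (I ⧸ LinearMap.range g) ∈ bracket A N n := by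
  obtain ⟨Y, hY, hXY⟩ := mem_bracket_iff.1 hX
  obtain ⟨L, J', hJ', hL, hNL⟩ := hY.exists_cosyzygy hM hJ
  exact mem_bracket_iff.2 ⟨L, hNL, hg.nonempty_retract_quotient_range hXY hL hJ'⟩

end IsInjectiveEnvelope

end Minimality

section Syzygy

variable {A : Type u} [Ring A] {M N S T X : ModuleCat.{u} A} {n s : ℕ}

variable (A) in
/-- `S` is an `n`-th syzygy of `X` in some projective resolution, not necessarily a minimal one.
Only the syzygies of the module that is shown to lie in a bracket have to be minimal. -/
def IsSyzygy : ℕ → ModuleCat.{u} A → ModuleCat.{u} A → Prop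
  | 0, X, S => Nonempty (S ≃ₗ[A] X)
  | n + 1, X, S => ∃ K P : ModuleCat.{u} A, Module.Projective A P ∧ IsExtension K P X ∧
      IsSyzygy n K S

variable (A) in
/-- `S` is an `n`-th cosyzygy of `X` in some injective coresolution, not necessarily a minimal
one. -/
def IsCosyzygy : ℕ → ModuleCat.{u} A → ModuleCat.{u} A → Prop
  | 0, X, S => Nonempty (S ≃ₗ[A] X)
  | n + 1, X, S => ∃ I N : ModuleCat.{u} A, Module.Injective A I ∧ IsExtension X I N ∧
      IsCosyzygy n N S

theorem IsMinimalSyzygy.isSyzygy (h : IsMinimalSyzygy A n X S) : IsSyzygy A n X S := by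
  induction n generalizing X with
  | zero => exact h
  | succ n ih =>
    obtain ⟨P, f, hf, hS⟩ := h
    exact ⟨_, P, hf.2.1, isExtension_ker hf.2.2.1, ih hS⟩

theorem IsMinimalCosyzygy.isCosyzygy (h : IsMinimalCosyzygy A n X S) : IsCosyzygy A n X S := by
  induction n generalizing X with
  | zero => exact h
  | succ n ih =>
    obtain ⟨I, g, hg, hS⟩ := h
    exact ⟨I, _, hg.1, isExtension_quotient_range hg.2.1, ih hS⟩

theorem IsMinimalSyzygy.mem_bracket (hS : IsMinimalSyzygy A s X S) (hX : X ∈ bracket A M n)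
    (hT : IsSyzygy A s M T) : S ∈ bracket A T n := by
  induction s generalizing M X with
  | zero =>
    obtain ⟨e⟩ := hS
    obtain ⟨e'⟩ := hT
    exact bracket_subset_of_retract (nonempty_retract_of_linearEquiv e'.symm)
      (mem_bracket_of_retract hX (nonempty_retract_of_linearEquiv e))
  | succ s ih =>
    obtain ⟨P, f, hf, hS⟩ := hS
    obtain ⟨K, Q, hQ, hK, hT⟩ := hT
    exact ih hS (hf.ker_mem_bracket hX hK) hT

theorem IsMinimalCosyzygy.mem_bracket (hS : IsMinimalCosyzygy A s X S) (hX : X ∈ bracket A M n)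
    (hT : IsCosyzygy A s M T) : S ∈ bracket A T n := by
  induction s generalizing M X with
  | zero =>
    obtain ⟨e⟩ := hS
    obtain ⟨e'⟩ := hT
    exact bracket_subset_of_retract (nonempty_retract_of_linearEquiv e'.symm)
      (mem_bracket_of_retract hX (nonempty_retract_of_linearEquiv e))
  | succ s ih =>
    obtain ⟨I, g, hg, hS⟩ := hS
    obtain ⟨J, N, hJ, hN, hT⟩ := hT
    exact ih hS (hg.quotient_range_mem_bracket hX hN hJ) hT

end Syzygy

section Pullback

variable {A : Type u} [Ring A] {n : ℕ}
variable {B C D E I J K L M N P Q W Y Z : ModuleCat.{u} A}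

theorem isExtension_pullback {u : L →ₗ[A] P} {p : P →ₗ[A] Z} (h : SES A u p) (t : I →ₗ[A] Z) :
    IsExtension L (.of A (LinearMap.eqLocus (t ∘ₗ .fst A I P) (p ∘ₗ .snd A I P))) I := by
  refine ⟨(LinearMap.inr A I P ∘ₗ u).codRestrict _ fun l => ?_,
    .fst A I P ∘ₗ Submodule.subtype _, .of_exact ?_ ?_ ?_⟩
  · simp [LinearMap.mem_eqLocus, h.exact.apply_apply_eq_zero]
  · exact fun l l' hl => h.1 (congrArg (fun w => w.1.2) hl)
  · intro x
    obtain ⟨y, hy⟩ := h.2.1 (t x)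
    exact ⟨⟨(x, y), hy.symm⟩, rfl⟩
  · refine LinearMap.exact_of_comp_of_mem_range rfl ?_
    rintro ⟨⟨x, y⟩, hxy⟩ (rfl : x = 0)
    obtain ⟨l, rfl⟩ := (h.exact y).1 (hxy.symm.trans (map_zero t))
    exact ⟨l, rfl⟩

theorem isExtension_pushout {w : Z →ₗ[A] E} {v : E →ₗ[A] L} (h : SES A w v) (t : Z →ₗ[A] P) :
    IsExtension P (.of A ((P × E) ⧸ LinearMap.range (t.prod (-w)))) L := by
  have hker : LinearMap.range (t.prod (-w)) ≤ LinearMap.ker (v ∘ₗ .snd A P E) := by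
    rintro _ ⟨z, rfl⟩
    simp [h.exact.apply_apply_eq_zero]
  refine ⟨Submodule.mkQ _ ∘ₗ .inl A P E, Submodule.liftQ _ (v ∘ₗ .snd A P E) hker,
    .of_exact ?_ ?_ ?_⟩
  · refine (injective_iff_map_eq_zero _).2 fun x hx => ?_
    obtain ⟨z, hz⟩ := (Submodule.Quotient.mk_eq_zero _).1 hx
    have hwz : -w z = 0 := congrArg Prod.snd hz
    have hz0 : z = 0 := (map_eq_zero_iff w h.1).1 (neg_eq_zero.1 hwz)
    rw [← show t z = x from congrArg Prod.fst hz, hz0, map_zero]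
  · intro l
    obtain ⟨e, rfl⟩ := h.2.1 l
    exact ⟨Submodule.Quotient.mk (0, e), rfl⟩
  · refine LinearMap.exact_of_comp_of_mem_range (LinearMap.ext fun _ => map_zero v) fun q hq => ?_
    obtain ⟨⟨x, e⟩, rfl⟩ := Submodule.Quotient.mk_surjective _ q
    obtain ⟨z, rfl⟩ := (h.exact e).1 hq
    refine ⟨x + t z, (Submodule.Quotient.eq _).2 ⟨z, ?_⟩⟩
    simp

namespace IsExtension

theorem exists_retract_pullback (hY : IsExtension Y I C) (hZ : IsExtension L P Z)
    [Module.Projective A P] (hC : Nonempty (Retract C Z)) :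
    ∃ W : ModuleCat.{u} A, IsExtension L W I ∧ Nonempty (Retract Y W) := by
  obtain ⟨g, h, hgh⟩ := hY
  obtain ⟨u, p, hup⟩ := hZ
  obtain ⟨j, r, hjr⟩ := nonempty_retract_iff.1 hC
  obtain ⟨s, hs⟩ := Module.projective_lifting_property h (r ∘ₗ p) hgh.2.1
  have hhs x : h (s x) = r (p x) := LinearMap.congr_fun hs x
  let W := LinearMap.eqLocus ((j ∘ₗ h) ∘ₗ .fst A I P) (p ∘ₗ .snd A I P)
  have hWI : IsExtension L (.of A W) I := isExtension_pullback hup (j ∘ₗ h)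
  let i : Y →ₗ[A] W := (LinearMap.inl A I P ∘ₗ g).codRestrict W fun y => by
    simp [W, LinearMap.mem_eqLocus, hgh.exact.apply_apply_eq_zero]
  obtain ⟨q, hq⟩ := hgh.exists_lift ((LinearMap.fst A I P - s ∘ₗ .snd A I P) ∘ₗ W.subtype) <| by
    rintro ⟨⟨x, y⟩, hxy⟩
    change h (x - s y) = 0
    rw [map_sub, hhs, ← show j (h x) = p y from hxy, hjr, sub_self]
  refine ⟨.of A W, hWI, nonempty_retract_iff.2 ⟨i, q, fun y => hgh.1 ?_⟩⟩
  calc g (q (i y)) = g y - s 0 := LinearMap.congr_fun hq (i y)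
    _ = g y := by rw [map_zero, sub_zero]

theorem exists_retract_pushout (hY : IsExtension N P Y) (hZ : IsExtension Z E L)
    (hE : Module.Injective A E) (hN : Nonempty (Retract N Z)) :
    ∃ W : ModuleCat.{u} A, IsExtension P W L ∧ Nonempty (Retract Y W) := by
  obtain ⟨u, v, huv⟩ := hY
  obtain ⟨w, p, hwp⟩ := hZ
  obtain ⟨j, r, hjr⟩ := nonempty_retract_iff.1 hN
  obtain ⟨s, hs⟩ := hE.out u huv.1 (w ∘ₗ j)
  have hsu x : s (u x) = w (j x) := hs x
  let R := LinearMap.range ((u ∘ₗ r).prod (-w))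
  have hPW : IsExtension P (.of A ((P × E) ⧸ R)) L := isExtension_pushout hwp (u ∘ₗ r)
  obtain ⟨i, hi⟩ := huv.exists_desc (R.mkQ ∘ₗ LinearMap.id.prod (-s)) fun x =>
    (Submodule.Quotient.mk_eq_zero R).2 ⟨j x, by simp [hjr, hsu]⟩
  have hiv x : i (v x) = Submodule.Quotient.mk (x, -s x) := LinearMap.congr_fun hi x
  have hR : R ≤ LinearMap.ker (v ∘ₗ .fst A P E) := by
    rintro _ ⟨z, rfl⟩
    simp [huv.exact.apply_apply_eq_zero]
  refine ⟨_, hPW, nonempty_retract_iff.2 ⟨i, R.liftQ (v ∘ₗ .fst A P E) hR, fun y => ?_⟩⟩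
  obtain ⟨x, rfl⟩ := huv.2.1 y
  rw [hiv]
  rfl

theorem left_mem_bracket (hY : IsExtension Y I C) (hC : C ∈ bracket A M n) (hI : MemAdd A D I)
    (hM : IsExtension K Q M) [Module.Projective A Q] :
    Y ∈ bracket A (.of A (K × D)) (n + 1) := by
  obtain ⟨Z, hZ, hCZ⟩ := mem_bracket_iff.1 hC
  obtain ⟨L, P, hP, hL, hKL⟩ := hZ.exists_syzygy hM
  obtain ⟨W, hW, hYW⟩ := hY.exists_retract_pullback hL hCZ
  have hLmem : L ∈ bracket A (.of A (K × D)) n :=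
    bracket_subset_of_retract (nonempty_retract_prod_left K D)
      (mem_bracket_iff.2 ⟨L, hKL, ⟨.refl L⟩⟩)
  have hImem : I ∈ bracket A (.of A (K × D)) 1 :=
    mem_bracket_one_of_memAdd (hI.of_retract (nonempty_retract_prod_right K D))
  exact mem_bracket_of_retract (hW.mem_bracket_add hLmem hImem) hYW

theorem right_mem_bracket (hY : IsExtension K P Y) (hK : K ∈ bracket A M n) (hP : MemAdd A B P)
    (hM : IsExtension M J N) (hJ : Module.Injective A J) :
    Y ∈ bracket A (.of A (N × B)) (n + 1) := by
  obtain ⟨Z, hZ, hKZ⟩ := mem_bracket_iff.1 hK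
  obtain ⟨L, E, hE, hL, hNL⟩ := hZ.exists_cosyzygy hM hJ
  obtain ⟨W, hW, hYW⟩ := hY.exists_retract_pushout hL hE hKZ
  have hLmem : L ∈ bracket A (.of A (N × B)) n :=
    bracket_subset_of_retract (nonempty_retract_prod_left N B)
      (mem_bracket_iff.2 ⟨L, hNL, ⟨.refl L⟩⟩)
  have hPmem : P ∈ bracket A (.of A (N × B)) 1 :=
    mem_bracket_one_of_memAdd (hP.of_retract (nonempty_retract_prod_right N B))
  rw [add_comm]
  exact mem_bracket_of_retract (hW.mem_bracket_add hPmem hLmem) hYW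

end IsExtension

end Pullback

section Dimension

variable {A : Type u} [Ring A] {n s : ℕ}
variable {B C M P S T X Y : ModuleCat.{u} A}

theorem IsSyzygy.prod (hS : IsSyzygy A n X S) (hT : IsSyzygy A n Y T) :
    IsSyzygy A n (.of A (X × Y)) (.of A (S × T)) := by
  induction n generalizing X Y with
  | zero =>
    obtain ⟨e⟩ := hS
    obtain ⟨e'⟩ := hT
    exact ⟨e.prodCongr e'⟩
  | succ n ih =>
    obtain ⟨K, P, hP, hX, hS⟩ := hS
    obtain ⟨L, Q, hQ, hY, hT⟩ := hT
    exact ⟨_, _, inferInstanceAs (Module.Projective A (P × Q)), hX.prod hY, ih hS hT⟩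

theorem IsCosyzygy.prod (hS : IsCosyzygy A n X S) (hT : IsCosyzygy A n Y T) :
    IsCosyzygy A n (.of A (X × Y)) (.of A (S × T)) := by
  induction n generalizing X Y with
  | zero =>
    obtain ⟨e⟩ := hS
    obtain ⟨e'⟩ := hT
    exact ⟨e.prodCongr e'⟩
  | succ n ih =>
    obtain ⟨I, K, hI, hX, hS⟩ := hS
    obtain ⟨J, L, hJ, hY, hT⟩ := hT
    exact ⟨_, _, injective_prod hI hJ, hX.prod hY, ih hS hT⟩

theorem memAdd_of_projective [Module.Finite A P] [Module.Projective A P] :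
    MemAdd A (.of A A) P := by
  obtain ⟨m, f, g, -, -, hfg⟩ := Module.Finite.exists_comp_eq_id_of_projective A P
  exact memAdd_iff.2 ⟨m, nonempty_retract_iff.2 ⟨g, f, LinearMap.congr_fun hfg⟩⟩

theorem IsMinimalSyzygy.exists_last (h : IsMinimalSyzygy A (s + 1) X S) :
    ∃ Y, IsMinimalSyzygy A s X Y ∧ ∃ (P : ModuleCat.{u} A) (f : P →ₗ[A] Y),
      IsProjectiveCover A f ∧ Nonempty (S ≃ₗ[A] LinearMap.ker f) := by
  induction s generalizing X with
  | zero =>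
    obtain ⟨P, f, hf, hS⟩ := h
    exact ⟨X, ⟨.refl A X⟩, P, f, hf, hS⟩
  | succ s ih =>
    obtain ⟨P, f, hf, hS⟩ := h
    obtain ⟨Y, hY, hlast⟩ := ih hS
    exact ⟨Y, ⟨P, f, hf, hY⟩, hlast⟩

theorem IsMinimalCosyzygy.exists_last (h : IsMinimalCosyzygy A (s + 1) X S) :
    ∃ Y, IsMinimalCosyzygy A s X Y ∧ ∃ (I : ModuleCat.{u} A) (g : Y →ₗ[A] I),
      IsInjectiveEnvelope A g ∧ Nonempty (S ≃ₗ[A] I ⧸ LinearMap.range g) := by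
  induction s generalizing X with
  | zero =>
    obtain ⟨I, g, hg, hS⟩ := h
    exact ⟨X, ⟨.refl A X⟩, I, g, hg, hS⟩
  | succ s ih =>
    obtain ⟨I, g, hg, hS⟩ := h
    obtain ⟨Y, hY, hlast⟩ := ih hS
    exact ⟨Y, ⟨I, g, hg, hY⟩, hlast⟩

variable (S) in
theorem nonempty_retract_prod_pi_succ (D : Fin (s + 1) → ModuleCat.{u} A) :
    Nonempty (Retract
      (ModuleCat.of A ((S × D (Fin.last s)) × ((i : Fin s) → D i.castSucc)))
      (ModuleCat.of A (S × ((i : Fin (s + 1)) → D i)))) :=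
  let e : (D (Fin.last s) × ((i : Fin s) → D i.castSucc)) ≃ₗ[A] ((i : Fin (s + 1)) → D i) :=
    (Fin.snocEquiv fun i => D i).toLinearEquiv
      { map_add := fun x y => funext fun i => by
          refine Fin.lastCases ?_ (fun j => ?_) i <;> simp
        map_smul := fun c x => funext fun i => by
          refine Fin.lastCases ?_ (fun j => ?_) i <;> simp }
  nonempty_retract_of_linearEquiv
    (LinearEquiv.prodAssoc A S _ _ ≪≫ₗ (LinearEquiv.refl A S).prodCongr e)

/-- The first `s` terms of a minimal injective coresolution of `X` lie in `add B`. -/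
def InjectiveTermsMemAdd (B X : ModuleCat.{u} A) (s : ℕ) : Prop :=
  ∀ i < s, ∀ (Y I : ModuleCat.{u} A) (g : Y →ₗ[A] I), IsMinimalCosyzygy A i X Y →
    IsInjectiveEnvelope A g → MemAdd A B I

theorem IsMinimalCosyzygy.mem_bracket_of_cosyzygy_mem (hC : IsMinimalCosyzygy A s X C)
    (hCM : C ∈ bracket A M n) (hS : IsSyzygy A s M S)
    (hB : InjectiveTermsMemAdd B X s)
    (D : Fin s → ModuleCat.{u} A) (hD : ∀ i : Fin s, IsSyzygy A i B (D i)) :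
    X ∈ bracket A (.of A (S × ((i : Fin s) → D i))) (n + s) := by
  induction s generalizing n M C S with
  | zero =>
    obtain ⟨e⟩ := hC
    obtain ⟨e'⟩ := hS
    obtain ⟨ρ⟩ := nonempty_retract_of_linearEquiv e'.symm
    obtain ⟨σ⟩ := nonempty_retract_prod_left S (.of A ((i : Fin 0) → D i))
    exact bracket_subset_of_retract ⟨ρ.trans σ⟩
      (mem_bracket_of_retract hCM (nonempty_retract_of_linearEquiv e.symm))
  | succ s ih =>
    obtain ⟨Y, hY, I, g, hg, ⟨e⟩⟩ := hC.exists_last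
    obtain ⟨K, Q, hQ, hM, hS⟩ := hS
    have hYI : IsExtension Y I C :=
      (isExtension_quotient_range hg.2.1).congr (.refl A Y) (.refl A I) e.symm
    have hYmem : Y ∈ bracket A (.of A (K × B)) (n + 1) :=
      hYI.left_mem_bracket hCM (hB s s.lt_succ_self Y I g hY hg) hM
    have hX := ih hY hYmem (hS.prod (hD (Fin.last s))) (fun i hi => hB i (hi.trans s.lt_succ_self))
      (fun i => D i.castSucc) fun i => hD i.castSucc
    rw [← add_assoc, Nat.add_right_comm]
    exact bracket_subset_of_retract (nonempty_retract_prod_pi_succ S D) hX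

theorem IsMinimalSyzygy.mem_bracket_of_syzygy_mem (hS : IsMinimalSyzygy A s X S)
    (hSM : S ∈ bracket A M n) (hC : IsCosyzygy A s M C)
    (D : Fin s → ModuleCat.{u} A) (hD : ∀ i : Fin s, IsCosyzygy A i (.of A A) (D i)) :
    X ∈ bracket A (.of A (C × ((i : Fin s) → D i))) (n + s) := by
  induction s generalizing n M C S with
  | zero =>
    obtain ⟨e⟩ := hS
    obtain ⟨e'⟩ := hC
    obtain ⟨ρ⟩ := nonempty_retract_of_linearEquiv e'.symm
    obtain ⟨σ⟩ := nonempty_retract_prod_left C (.of A ((i : Fin 0) → D i))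
    exact bracket_subset_of_retract ⟨ρ.trans σ⟩
      (mem_bracket_of_retract hSM (nonempty_retract_of_linearEquiv e.symm))
  | succ s ih =>
    obtain ⟨Y, hY, P, f, hf, ⟨e⟩⟩ := hS.exists_last
    obtain ⟨J, N, hJ, hM, hC⟩ := hC
    have := hf.1
    have := hf.2.1
    have hYP : IsExtension S P Y :=
      (isExtension_ker hf.2.2.1).congr e.symm (.refl A P) (.refl A Y)
    have hYmem : Y ∈ bracket A (.of A (N × A)) (n + 1) :=
      hYP.right_mem_bracket hSM memAdd_of_projective hM hJ
    have hX := ih hY hYmem (hC.prod (hD (Fin.last s))) (fun i => D i.castSucc)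
      fun i => hD i.castSucc
    rw [← add_assoc, Nat.add_right_comm]
    exact bracket_subset_of_retract (nonempty_retract_prod_pi_succ C D) hX

end Dimension

section Coseparator

variable {A : Type u} [Ring A] {D I X Y : ModuleCat.{u} A} {n : ℕ}

theorem isCoseparator_iff_exists_apply_ne_zero :
    IsCoseparator D ↔
      ∀ (Y : ModuleCat.{u} A) (y : Y), y ≠ 0 → ∃ f : Y →ₗ[A] D, f y ≠ 0 := by
  rw [Preadditive.isCoseparator_iff]
  constructor
  · intro hD Y y hy
    by_contra! hf
    have hzero := hD (X := .of A A) (ModuleCat.ofHom (LinearMap.toSpanSingleton A Y y)) fun f => by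
      ext
      simp [hf]
    exact hy (by simpa using ConcreteCategory.congr_hom hzero (1 : A))
  · intro hD X Y t ht
    ext x
    by_contra hx
    obtain ⟨f, hf⟩ := hD Y (t x) hx
    exact hf (ConcreteCategory.congr_hom (ht (ModuleCat.ofHom f)) x)

theorem isCoseparator_of_injective (hD : Module.Injective A D)
    (hsimple : ∀ (S : ModuleCat.{u} A) [IsSimpleModule A S], ∃ f : S →ₗ[A] D, f ≠ 0) :
    IsCoseparator D := by
  refine isCoseparator_iff_exists_apply_ne_zero.2 fun Y y hy => ?_
  let T := LinearMap.toSpanSingleton A Y y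
  have hT : LinearMap.ker T ≠ ⊤ := fun h => hy <| by
    simpa [T] using LinearMap.congr_fun (LinearMap.ker_eq_top.1 h) 1
  obtain ⟨m, hm, hTm⟩ := Ideal.exists_le_maximal _ hT
  have hS : IsSimpleModule A (A ⧸ m) := isSimpleModule_iff_quot_maximal.2 ⟨m, hm, ⟨.refl A _⟩⟩
  obtain ⟨f, hf⟩ := hsimple (.of A (A ⧸ m))
  obtain ⟨φ, hφ⟩ := hD.out ((LinearMap.ker T).liftQ T le_rfl)
    (LinearMap.ker_eq_bot.1 (Submodule.ker_liftQ_eq_bot _ _ _ le_rfl))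
    (f ∘ₗ Submodule.factor hTm)
  refine ⟨φ, fun hzero => hf ?_⟩
  have hone : f (Submodule.Quotient.mk 1) = 0 := by
    simpa [T, hzero] using (hφ (Submodule.Quotient.mk 1)).symm
  ext
  exact hone

theorem exists_injective_pi_of_isCoseparator (hD : IsCoseparator D) [IsArtinian A Y] :
    ∃ (m : ℕ) (j : Y →ₗ[A] (Fin m → D)), Function.Injective j := by
  obtain ⟨t, ht⟩ := Finset.exists_inf_le fun f : Y →ₗ[A] D => LinearMap.ker f
  refine ⟨t.card, LinearMap.pi fun i => t.equivFin.symm i,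
    (injective_iff_map_eq_zero _).2 fun y hy => ?_⟩
  have hmem : y ∈ t.inf fun f : Y →ₗ[A] D => LinearMap.ker f :=
    (Submodule.mem_finsetInf).2 fun f hf => by simpa using congrFun hy (t.equivFin ⟨f, hf⟩)
  by_contra hne
  obtain ⟨f, hf⟩ := isCoseparator_iff_exists_apply_ne_zero.1 hD Y y hne
  exact hf (ht f hmem)

theorem IsInjectiveEnvelope.memAdd {g : Y →ₗ[A] I} (hg : IsInjectiveEnvelope A g)
    (hinj : Module.Injective A D) (hD : IsCoseparator D) [IsArtinian A Y] : MemAdd A D I := by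
  obtain ⟨m, j, hj⟩ := exists_injective_pi_of_isCoseparator hD (Y := Y)
  have hpi : Module.Injective A (Fin m → D) := inferInstance
  obtain ⟨a, ha⟩ := hpi.out g hg.2.1 j
  have ha_inj : Function.Injective a := by
    refine LinearMap.ker_eq_bot.1 (by_contra fun hne => hg.2.2 _ hne ?_)
    rw [Submodule.eq_bot_iff]
    rintro _ ⟨hx, x, rfl⟩
    have hjx : j x = 0 := (ha x).symm.trans hx
    rw [(map_eq_zero_iff j hj).1 hjx, map_zero]
  obtain ⟨b, hb⟩ := hg.1.out a ha_inj .id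
  exact memAdd_iff.2 ⟨m, nonempty_retract_iff.2 ⟨a, b, hb⟩⟩

theorem MemAdd.isArtinian [IsArtinian A D] (h : MemAdd A D X) : IsArtinian A X := by
  obtain ⟨m, hm⟩ := memAdd_iff.1 h
  obtain ⟨i, r, hir⟩ := nonempty_retract_iff.1 hm
  exact isArtinian_of_injective i (Function.LeftInverse.injective hir)

theorem IsMinimalCosyzygy.isArtinian (hY : IsMinimalCosyzygy A n X Y)
    (hinj : Module.Injective A D) (hD : IsCoseparator D) [IsArtinian A X]
    (hart : n ≠ 0 → IsArtinian A D) : IsArtinian A Y := by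
  induction n generalizing X with
  | zero =>
    obtain ⟨e⟩ := hY
    exact isArtinian_of_linearEquiv e.symm
  | succ n ih =>
    obtain ⟨I, g, hg, hY⟩ := hY
    have := hart n.succ_ne_zero
    have := (hg.memAdd hinj hD).isArtinian
    have : IsArtinian A (ModuleCat.of A (I ⧸ LinearMap.range g)) :=
      inferInstanceAs (IsArtinian A (I ⧸ LinearMap.range g))
    exact ih hY fun _ => hart n.succ_ne_zero

theorem injectiveTermsMemAdd_of_isCoseparator (hinj : Module.Injective A D)
    (hD : IsCoseparator D) [IsArtinian A X] (hart : 1 < n → IsArtinian A D) :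
    InjectiveTermsMemAdd D X n := fun i hi _ _ _ hY hg => by
  have := hY.isArtinian hinj hD fun h0 => hart (by lia)
  exact hg.memAdd hinj hD

theorem IsMinimalSyzygy.finite_of_succ (h : IsMinimalSyzygy A (n + 1) X Y) : Module.Finite A X := by
  obtain ⟨P, f, hf, -⟩ := h
  have := hf.1
  exact .of_surjective f hf.2.2.1

end Coseparator

section Coinduction

variable {k : Type u} [CommRing k] {A : Type u} [Ring A] [Algebra k A]
variable {E : Type u} [AddCommGroup E] [Module k E]

/-- Coinduction: `Hom_k(A, E)` represents the functor `Y ↦ Hom_k(Y, E)` on `A`-modules, with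
evaluation at `1` as the universal map. -/
noncomputable def dualHomEquiv {Y : Type*} [AddCommGroup Y] [Module A Y] [Module k Y]
    [IsScalarTower k A Y] : (Y →ₗ[k] E) ≃ (Y →ₗ[A] (A →ₗ[k] E)) where
  toFun φ :=
    { toFun y := φ ∘ₗ (LinearMap.toSpanSingleton A Y y).restrictScalars k
      map_add' x y := by
        ext
        simp
      map_smul' b y := by
        ext a
        exact congrArg φ (mul_smul a b y).symm }
  invFun g :=
    { toFun y := g y 1
      map_add' x y := by rw [map_add, LinearMap.add_apply]
      map_smul' c y := by
        rw [← algebraMap_smul A c y, map_smul]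
        change g y (1 * algebraMap k A c) = c • g y 1
        rw [one_mul, Algebra.algebraMap_eq_smul_one, map_smul] }
  left_inv φ := by
    ext y
    simp
  right_inv g := by
    ext y a
    change g (a • y) 1 = g y a
    rw [map_smul]
    exact congrArg (g y) (one_mul a)

theorem injective_dual (hE : Module.Injective k E) : Module.Injective A (A →ₗ[k] E) where
  out X Y _ _ _ _ f hf g := by
    let _ := Module.compHom X (algebraMap k A)
    let _ := Module.compHom Y (algebraMap k A)
    have : IsScalarTower k A X := .of_algebraMap_smul fun _ _ => rfl
    have : IsScalarTower k A Y := .of_algebraMap_smul fun _ _ => rfl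
    obtain ⟨h, hh⟩ := hE.out (f.restrictScalars k) hf (dualHomEquiv.symm g)
    have hext : dualHomEquiv h ∘ₗ f = g := dualHomEquiv.symm.injective <| by
      ext x
      refine Eq.trans ?_ (hh x)
      exact LinearMap.congr_fun (dualHomEquiv.symm_apply_apply h) (f x)
    exact ⟨dualHomEquiv h, LinearMap.congr_fun hext⟩

theorem isCoseparator_dual (hE : IsCoseparator (ModuleCat.of k E)) :
    IsCoseparator (ModuleCat.of A (A →ₗ[k] E)) := by
  refine isCoseparator_iff_exists_apply_ne_zero.2 fun Y y hy => ?_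
  let _ := Module.compHom Y (algebraMap k A)
  have : IsScalarTower k A Y := .of_algebraMap_smul fun _ _ => rfl
  obtain ⟨φ, hφ⟩ : ∃ φ : Y →ₗ[k] E, φ y ≠ 0 :=
    isCoseparator_iff_exists_apply_ne_zero.1 hE (.of k Y) y hy
  refine ⟨dualHomEquiv φ, fun h => hφ ?_⟩
  rw [← (dualHomEquiv (A := A)).symm_apply_apply φ]
  exact LinearMap.congr_fun h 1

theorem isCoseparator_of_injective_quotient_jacobson [IsArtinianRing k]
    (hE : Module.Injective k E) {ι : (k ⧸ (⊥ : Ideal k).jacobson) →ₗ[k] E}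
    (hι : Function.Injective ι) : IsCoseparator (ModuleCat.of k E) := by
  refine isCoseparator_of_injective hE fun S hS => ?_
  obtain ⟨m, hm, ⟨e⟩⟩ := isSimpleModule_iff_quot_maximal.1 hS
  have hss : IsSemisimpleModule k (k ⧸ (⊥ : Ideal k).jacobson) := by
    rw [Ideal.jacobson_bot]
    exact (IsArtinian.isSemisimpleModule_iff_jacobson ..).2 (Module.jacobson_quotient_jacobson ..)
  have hle : (⊥ : Ideal k).jacobson ≤ m := sInf_le ⟨bot_le, hm⟩
  obtain ⟨s, hs⟩ := IsSemisimpleModule.lifting_property (Submodule.factor hle)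
    (Submodule.factor_surjective hle) e.toLinearMap
  have hs_inj : Function.Injective s :=
    .of_comp (f := Submodule.factor hle) (by rw [← LinearMap.coe_comp, hs]; exact e.injective)
  have := IsSimpleModule.nontrivial k S
  obtain ⟨x, hx⟩ := exists_ne (0 : S)
  exact ⟨ι ∘ₗ s, fun h => hx (hι.comp hs_inj (by simpa using LinearMap.congr_fun h x))⟩

theorem injectiveTermsMemAdd_dual [IsArtinianRing k] [Module.Finite k A]
    {ι : (ModuleCat.of k (k ⧸ (⊥ : Ideal k).jacobson)) →ₗ[k] (ModuleCat.of k E)}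
    (hι : IsInjectiveEnvelope k ι) {X : ModuleCat.{u} A} [Module.Finite A X] {s : ℕ}
    (hfin : 1 < s → Module.Finite A (A →ₗ[k] E)) :
    InjectiveTermsMemAdd (.of A (A →ₗ[k] E)) X s := by
  have := IsArtinianRing.of_finite k A
  have hE : IsCoseparator (ModuleCat.of k E) :=
    isCoseparator_of_injective_quotient_jacobson hι.1 hι.2.1
  refine injectiveTermsMemAdd_of_isCoseparator (injective_dual hι.1) (isCoseparator_dual hE)
    fun hs => ?_
  have := hfin hs
  infer_instance

end Coinduction

section General

variable {A : Type u} [Ring A]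

theorem bracket_syzygy_relations_general (M X B : ModuleCat.{u} A) (n s : ℕ) :
    (X ∈ bracket A M n →
      (∀ S T, IsMinimalSyzygy A s X S → IsSyzygy A s M T → S ∈ bracket A T n) ∧
      (∀ S T, IsMinimalCosyzygy A s X S → IsCosyzygy A s M T → S ∈ bracket A T n)) ∧
    (InjectiveTermsMemAdd B X s →
      ∀ C, IsMinimalCosyzygy A s X C → C ∈ bracket A M n → ∀ S, IsSyzygy A s M S →
      ∀ D : Fin s → ModuleCat.{u} A, (∀ i : Fin s, IsSyzygy A i B (D i)) →
        X ∈ bracket A (.of A (S × ((i : Fin s) → D i))) (n + s)) ∧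
    (∀ S, IsMinimalSyzygy A s X S → S ∈ bracket A M n → ∀ C, IsCosyzygy A s M C →
      ∀ D : Fin s → ModuleCat.{u} A, (∀ i : Fin s, IsCosyzygy A i (.of A A) (D i)) →
        X ∈ bracket A (.of A (C × ((i : Fin s) → D i))) (n + s)) :=
  ⟨fun hX => ⟨fun _ _ hS hT => hS.mem_bracket hX hT, fun _ _ hS hT => hS.mem_bracket hX hT⟩,
    fun hB _ hC hCM _ hS D hD => hC.mem_bracket_of_cosyzygy_mem hCM hS hB D hD,
    fun _ hS hSM _ hC D hD => hS.mem_bracket_of_syzygy_mem hSM hC D hD⟩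

end General

section Statement

variable (k : Type u) [CommRing k] [IsArtinianRing k]
variable (A : Type u) [Ring A] [Algebra k A] [Module.Finite k A]
variable (E₀ : Type u) [AddCommGroup E₀] [Module k E₀]

/-- **Lemma (syzygies, cosyzygies and the brackets `[M]ₙ`)**: let `A` be an Artin algebra
over a commutative Artinian ring `k`, `D = Hom_k(−, E(k/rad k))` the standard duality, and
`M`, `X` finitely generated `A`-modules, `n, s ≥ 0`. Then
(1) if `X ∈ [M]_{n+1}`, then `Ω^s(X) ∈ [Ω^s(M)]_{n+1}` and `Ω^{-s}(X) ∈ [Ω^{-s}(M)]_{n+1}`;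
(2) if `Ω^{-s}(X) ∈ [M]_{n+1}`, then
    `X ∈ [Ω^s(M) ⊕ (⊕_{i=0}^{s-1} Ω^i(D(A)))]_{n+s+1}`;
(3) if `Ω^s(X) ∈ [M]_{n+1}`, then
    `X ∈ [Ω^{-s}(M) ⊕ (⊕_{i=0}^{s-1} Ω^{-i}(A))]_{n+s+1}`.
Here `E₀`, together with `ι`, is an injective envelope `E(k/rad k)` of `k/rad k`, so that
`D(A) = Hom_k(A, E₀)`. -/
theorem bracket_syzygy_relations
    (M X : ModuleCat.{u} A) (hM : Module.Finite A M) (hX : Module.Finite A X) (n s : ℕ)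
    (ι : ↥(ModuleCat.of k (k ⧸ Ideal.jacobson (⊥ : Ideal k))) →ₗ[k] ↥(ModuleCat.of k E₀))
    (hι : IsInjectiveEnvelope k ι) :
    (X ∈ bracket A M (n + 1) →
      (∀ S SM, IsMinimalSyzygy A s X S → IsMinimalSyzygy A s M SM →
        S ∈ bracket A SM (n + 1)) ∧
      (∀ S SM, IsMinimalCosyzygy A s X S → IsMinimalCosyzygy A s M SM →
        S ∈ bracket A SM (n + 1))) ∧
    (∀ CX, IsMinimalCosyzygy A s X CX → CX ∈ bracket A M (n + 1) →
      ∀ SM, IsMinimalSyzygy A s M SM →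
      ∀ D : Fin s → ModuleCat.{u} A,
        (∀ i : Fin s, IsMinimalSyzygy A (i : ℕ) (ModuleCat.of A (A →ₗ[k] E₀)) (D i)) →
        X ∈ bracket A (ModuleCat.of A (↥SM × ((i : Fin s) → ↥(D i)))) (n + s + 1)) ∧
    (∀ SX, IsMinimalSyzygy A s X SX → SX ∈ bracket A M (n + 1) →
      ∀ CM, IsMinimalCosyzygy A s M CM →
      ∀ C : Fin s → ModuleCat.{u} A,
        (∀ i : Fin s, IsMinimalCosyzygy A (i : ℕ) (ModuleCat.of A A) (C i)) →
        X ∈ bracket A (ModuleCat.of A (↥CM × ((i : Fin s) → ↥(C i)))) (n + s + 1)) := by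
  obtain ⟨h₁, h₂, h₃⟩ :=
    bracket_syzygy_relations_general M X (.of A (A →ₗ[k] E₀)) (n + 1) s
  rw [Nat.add_right_comm n s 1]
  refine ⟨fun hXM => ⟨fun S T hS hT => (h₁ hXM).1 S T hS hT.isSyzygy,
      fun S T hS hT => (h₁ hXM).2 S T hS hT.isCosyzygy⟩,
    fun C hC hCM S hS D hD => ?_,
    fun S hS hSM C hC D hD => h₃ S hS hSM C hC.isCosyzygy D fun i => (hD i).isCosyzygy⟩
  have hB := injectiveTermsMemAdd_dual hι (X := X) fun hs => (hD ⟨1, hs⟩).finite_of_succ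
  exact h₂ hB C hC hCM S hS.isSyzygy D fun i => (hD i).isSyzygy

end Statement

end ExtDim
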